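/- In the complex numbers, F(1/8,5/8) − 2√3·F(3/8,7/8) − 4i√3·F(5/8,9/8) − 8i·F(7/8,11/8) = 2·(1 − i√2 − √3)·(F(3/8,7/8) + 2i·F(5/8,9/8)). -/

import Mathlib

/-- The Pochhammer symbol (x)_k = x(x+1)⋯(x+k−1). -/
noncomputable def poch (x : ℝ) (k : ℕ) : ℝ := ∏ i ∈ Finset.range k, (x + i)

/-- The hypergeometric series ₃F₂(a1,a2,a3;b1,b2;1). -/
noncomputable def threeF2 (a1 a2 a3 b1 b2 : ℝ) : ℝ :=
  ∑' k : ℕ, poch a1 k * poch a2 k * poch a3 k /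
    (poch b1 k * poch b2 k * (Nat.factorial k : ℝ))

/-- The Beta function B(a,b) = Γ(a)Γ(b)/Γ(a+b). -/
noncomputable def betaFn (a b : ℝ) : ℝ :=
  Real.Gamma a * Real.Gamma b / Real.Gamma (a + b)

/-- The normalized hypergeometric value
F(r,s) = (2^{1−4r}·B(r,s−r)/N(r)) · ₃F₂(1/2,1/2,r;1,s;1), where N(r) = 2·den(r). -/
noncomputable def Fval (r s : ℚ) : ℝ :=
  (2:ℝ) ^ ((1:ℝ) - 4 * (r:ℝ)) * betaFn (r:ℝ) ((s:ℝ) - (r:ℝ)) / (2 * (r.den : ℝ)) *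
    threeF2 (1/2) (1/2) (r:ℝ) 1 (s:ℝ)

/-!
For `r > 0` the number `betaF r = B(r, 1/2) ₃F₂(1/2, 1/2, r; 1, r + 1/2; 1)` is, up to a constant,
the Mellin moment `∫₀¹ t^(r-1) (1-t)^(-1/2) K(t) dt` of the complete elliptic integral `K`. If `f`
is holomorphic on `ℂ` cut along `[1, ∞)`, its moment `P z = ∫₀¹ t^(r-1) f (t z) dt` satisfies
`r P + z P' = f`, so `exp (i r y) P (exp (i y))` is a primitive of `i exp (i r y) f (exp (i y))`.
Comparing the two sides of the cut turns `betaF r` into a Fourier integral of `K` over the unit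
circle.

On the other hand, evaluating the Mehler–Dirichlet integral `∫₀^θ (2 (cos y - cos θ))^(-1/2) dy`
in two ways expresses `K (tan⁴ (φ/2))` through the boundary value `K (exp (4 i φ))`. Substituting
`t = tan⁴ (φ/2)` in the moment for `betaF r + betaF (r + 1/2)` therefore gives another integral
over the circle. For `r = 1/8` and `r = 3/8` its kernel reduces to `cos (φ/2)` and `sin (φ/2)`,
which are combinations of the Fourier kernels for `betaF (5/8)` and `betaF (3/8)`. The two resulting
linear relations are equivalent to the real and imaginary parts of the identity.
-/

section

open MeasureTheory Set Filter Topology Metric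
open Complex (I exp)
open scoped ComplexConjugate Interval Real

/-! ### Integrals along rays from the origin -/

/-- The integral of `f` along the segment from `0` to `z`, with weight `w` in the parameter. -/
noncomputable def rayIntegral (w : ℝ → ℝ) (f : ℂ → ℂ) (z : ℂ) : ℂ :=
  ∫ t in (0 : ℝ)..1, (w t : ℂ) * f (t * z)

lemma ofReal_mul_mem_of_starConvex {U : Set ℂ} (hU : StarConvex ℝ 0 U) {z : ℂ} (hz : z ∈ U)
    {t : ℝ} (ht : t ∈ Icc (0 : ℝ) 1) : (t : ℂ) * z ∈ U := by
  simpa using hU.smul_mem hz ht.1 ht.2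

lemma aestronglyMeasurable_ray {w : ℝ → ℝ} {f : ℂ → ℂ} {z : ℂ}
    (hw : AEStronglyMeasurable w (volume.restrict (Ι 0 1)))
    (hf : ContinuousOn (fun t : ℝ => f (t * z)) (Ioo 0 1)) :
    AEStronglyMeasurable (fun t : ℝ => (w t : ℂ) * f (t * z)) (volume.restrict (Ι 0 1)) := by
  refine (Complex.measurable_ofReal.comp_aemeasurable hw.aemeasurable).aestronglyMeasurable.mul ?_
  rw [uIoc_of_le zero_le_one, ← Measure.restrict_congr_set Ioo_ae_eq_Ioc]
  exact hf.aestronglyMeasurable measurableSet_Ioo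

lemma intervalIntegrable_ofReal {f : ℝ → ℝ} {a b : ℝ} (hf : IntervalIntegrable f volume a b) :
    IntervalIntegrable (fun t => (f t : ℂ)) volume a b :=
  intervalIntegrable_iff.2 (intervalIntegrable_iff.1 hf).ofReal

lemma continuousOn_ray {U : Set ℂ} {g : ℂ → ℂ} (hU : StarConvex ℝ 0 U) (hg : ContinuousOn g U)
    {z : ℂ} (hz : z ∈ U) : ContinuousOn (fun t : ℝ => g (t * z)) (Icc 0 1) :=
  hg.comp (by fun_prop) fun _ ht => ofReal_mul_mem_of_starConvex hU hz ht

lemma intervalIntegrable_mul_ray {U : Set ℂ} {w : ℝ → ℝ} {g : ℂ → ℂ} (hU : StarConvex ℝ 0 U)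
    (hw : IntervalIntegrable w volume 0 1) (hg : ContinuousOn g U) {z : ℂ} (hz : z ∈ U) :
    IntervalIntegrable (fun t : ℝ => (w t : ℂ) * g (t * z)) volume 0 1 := by
  refine (intervalIntegrable_ofReal hw).mul_continuousOn ?_
  rw [uIcc_of_le zero_le_one]
  exact continuousOn_ray hU hg hz

lemma exists_norm_le_on_rays {U : Set ℂ} {g : ℂ → ℂ} (hU : IsOpen U) (hU0 : StarConvex ℝ 0 U)
    (hg : ContinuousOn g U) {z : ℂ} (hz : z ∈ U) :
    ∃ M, ∀ᶠ ζ in 𝓝 z, ζ ∈ U ∧ ∀ t ∈ Icc (0 : ℝ) 1, ‖g (t * ζ)‖ ≤ M := by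
  obtain ⟨ε, hε, hball⟩ := nhds_basis_closedBall.mem_iff.1 (hU.mem_nhds hz)
  have hK : IsCompact (Icc (0 : ℝ) 1 ×ˢ closedBall z ε) :=
    isCompact_Icc.prod (isCompact_closedBall z ε)
  have hmaps : MapsTo (fun p : ℝ × ℂ => (p.1 : ℂ) * p.2) (Icc (0 : ℝ) 1 ×ˢ closedBall z ε) U :=
    fun p hp => ofReal_mul_mem_of_starConvex hU0 (hball hp.2) hp.1
  have hcont : Continuous fun p : ℝ × ℂ => (p.1 : ℂ) * p.2 := by fun_prop
  obtain ⟨M, hM⟩ := hK.exists_bound_of_continuousOn (hg.comp hcont.continuousOn hmaps)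
  refine ⟨M, ?_⟩
  filter_upwards [closedBall_mem_nhds z hε] with ζ hζ
  exact ⟨hball hζ, fun t ht => hM (t, ζ) ⟨ht, hζ⟩⟩

lemma hasDerivAt_rayIntegral {U : Set ℂ} {w : ℝ → ℝ} {f : ℂ → ℂ} (hU : IsOpen U)
    (hU0 : StarConvex ℝ 0 U) (hf : DifferentiableOn ℂ f U)
    (hw : IntervalIntegrable w volume 0 1) {z : ℂ} (hz : z ∈ U) :
    HasDerivAt (rayIntegral w f) (rayIntegral (fun t => w t * t) (deriv f) z) z := by
  have hw_meas := hw.aestronglyMeasurable_restrict_uIoc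
  have hwt_meas : AEStronglyMeasurable (fun t => w t * t) (volume.restrict (Ι 0 1)) :=
    hw_meas.mul aestronglyMeasurable_id
  have hf' : ContinuousOn (deriv f) U := (hf.deriv hU).continuousOn
  obtain ⟨M, hM⟩ := exists_norm_le_on_rays hU hU0 hf' hz
  refine (intervalIntegral.hasDerivAt_integral_of_dominated_loc_of_deriv_le
    (F := fun ζ t => (w t : ℂ) * f (t * ζ)) (F' := fun ζ t => ((w t * t : ℝ) : ℂ) * deriv f (t * ζ))
    (bound := fun t => |w t| * M) (s := {ζ | ζ ∈ U ∧ ∀ t ∈ Icc (0 : ℝ) 1, ‖deriv f (t * ζ)‖ ≤ M})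
    hM ?_ (intervalIntegrable_mul_ray hU0 hw hf.continuousOn hz)
    (aestronglyMeasurable_ray hwt_meas ((continuousOn_ray hU0 hf' hz).mono Ioo_subset_Icc_self))
    ?_ (hw.abs.mul_const M) ?_).2
  · filter_upwards [hU.mem_nhds hz] with ζ hζ
    exact aestronglyMeasurable_ray hw_meas
      ((continuousOn_ray hU0 hf.continuousOn hζ).mono Ioo_subset_Icc_self)
  · refine .of_forall fun t ht ζ hζ => ?_
    rw [uIoc_of_le zero_le_one] at ht
    rw [norm_mul, Complex.norm_real, Real.norm_eq_abs, abs_mul, abs_of_pos ht.1]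
    exact mul_le_mul (mul_le_of_le_one_right (abs_nonneg _) ht.2) (hζ.2 t ⟨ht.1.le, ht.2⟩)
      (norm_nonneg _) (abs_nonneg _)
  · refine .of_forall fun t ht ζ hζ => ?_
    rw [uIoc_of_le zero_le_one] at ht
    have hmem := ofReal_mul_mem_of_starConvex hU0 hζ.1 ⟨ht.1.le, ht.2⟩
    have hd := (hf.differentiableAt (hU.mem_nhds hmem)).hasDerivAt.comp ζ
      ((hasDerivAt_id ζ).const_mul (t : ℂ))
    refine (hd.const_mul (w t : ℂ)).congr_deriv ?_
    push_cast
    ring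

lemma intervalIntegrable_rpow_sub_one {r : ℝ} (hr : 0 < r) :
    IntervalIntegrable (fun t : ℝ => t ^ (r - 1)) volume 0 1 :=
  intervalIntegral.intervalIntegrable_rpow' (by linarith)

lemma mul_rayIntegral_add_mul_deriv {U : Set ℂ} {f : ℂ → ℂ} {r : ℝ} (hU : IsOpen U)
    (hU0 : StarConvex ℝ 0 U) (hf : DifferentiableOn ℂ f U) (hr : 0 < r) {z : ℂ} (hz : z ∈ U) :
    r * rayIntegral (fun t => t ^ (r - 1)) f z +
      z * rayIntegral (fun t => t ^ (r - 1) * t) (deriv f) z = f z := by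
  have hw := intervalIntegrable_rpow_sub_one hr
  have hwt : IntervalIntegrable (fun t : ℝ => t ^ (r - 1) * t) volume 0 1 :=
    hw.mul_continuousOn continuousOn_id
  have hint := (intervalIntegrable_mul_ray hU0 hw hf.continuousOn hz).const_mul (r : ℂ)
  have hint' := (intervalIntegrable_mul_ray hU0 hwt (hf.deriv hU).continuousOn hz).const_mul z
  rw [rayIntegral, rayIntegral, ← intervalIntegral.integral_const_mul,
    ← intervalIntegral.integral_const_mul, ← intervalIntegral.integral_add hint hint']
  rw [intervalIntegral.integral_eq_sub_of_hasDerivAt_of_le zero_le_one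
    (f := fun t : ℝ => ((t ^ r : ℝ) : ℂ) * f (t * z)) ?_ ?_ (hint.add hint')]
  · simp [Real.zero_rpow hr.ne']
  · refine ContinuousOn.mul ?_ (continuousOn_ray hU0 hf.continuousOn hz)
    exact (Complex.continuous_ofReal.comp (Real.continuous_rpow_const hr.le)).continuousOn
  · intro t ht
    have hmem := ofReal_mul_mem_of_starConvex hU0 hz (Ioo_subset_Icc_self ht)
    have h1 := (Real.hasDerivAt_rpow_const (p := r) (.inl ht.1.ne')).ofReal_comp
    have h2 := (hf.differentiableAt (hU.mem_nhds hmem)).hasDerivAt.comp t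
      ((Complex.ofRealCLM.hasDerivAt (x := t)).mul_const z)
    refine (h1.mul h2).congr_deriv ?_
    have h3 : t ^ r = t ^ (r - 1) * t := by
      rw [← Real.rpow_add_one ht.1.ne', sub_add_cancel]
    simp only [Function.comp_apply, Complex.ofRealCLM_apply, h3]
    push_cast
    ring

lemma hasDerivAt_cexp_mul_rayIntegral {U : Set ℂ} {f : ℂ → ℂ} {r y : ℝ} (hU : IsOpen U)
    (hU0 : StarConvex ℝ 0 U) (hf : DifferentiableOn ℂ f U) (hr : 0 < r) (hy : exp (y * I) ∈ U) :
    HasDerivAt (fun y : ℝ => exp (r * y * I) * rayIntegral (fun t => t ^ (r - 1)) f (exp (y * I)))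
      (I * (exp (r * y * I) * f (exp (y * I)))) y := by
  have hexp : ∀ c : ℂ, HasDerivAt (fun y : ℝ => exp (c * y * I)) (exp (c * y * I) * (c * I)) y :=
    fun c => (((Complex.ofRealCLM.hasDerivAt (x := y)).const_mul c).mul_const I).cexp.congr_deriv
      (by simp)
  have h1 := hexp 1
  simp only [one_mul] at h1
  have hP := (hasDerivAt_rayIntegral hU hU0 hf (intervalIntegrable_rpow_sub_one hr) hy).comp y h1
  refine ((hexp r).mul hP).congr_deriv ?_
  rw [Function.comp_apply, ← mul_rayIntegral_add_mul_deriv hU hU0 hf hr hy]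
  ring

lemma ofReal_betaFn {p q : ℝ} (hp : 0 < p) (hq : 0 < q) :
    (betaFn p q : ℂ) = Complex.betaIntegral p q := by
  rw [Complex.betaIntegral_eq_Gamma_mul_div _ _ (by simpa) (by simpa), ← Complex.ofReal_add,
    Complex.Gamma_ofReal, Complex.Gamma_ofReal, Complex.Gamma_ofReal, betaFn]
  norm_cast

lemma betaIntegrand_eq_ofReal {p q t : ℝ} (ht : t ∈ Ioo (0 : ℝ) 1) :
    (t : ℂ) ^ ((p : ℂ) - 1) * (1 - (t : ℂ)) ^ ((q : ℂ) - 1) =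
      ((t ^ (p - 1) * (1 - t) ^ (q - 1) : ℝ) : ℂ) := by
  rw [Complex.ofReal_mul, Complex.ofReal_cpow ht.1.le, Complex.ofReal_cpow (by linarith [ht.2])]
  push_cast
  rfl

lemma intervalIntegrable_beta {p q : ℝ} (hp : 0 < p) (hq : 0 < q) :
    IntervalIntegrable (fun t : ℝ => t ^ (p - 1) * (1 - t) ^ (q - 1)) volume 0 1 := by
  have h := Complex.betaIntegral_convergent (u := p) (v := q) (by simpa) (by simpa)
  rw [intervalIntegrable_iff] at h
  refine (intervalIntegrable_iff.2 h.re).congr_uIoo fun t ht => ?_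
  rw [uIoo_of_le zero_le_one] at ht
  simp only [betaIntegrand_eq_ofReal ht, RCLike.re_eq_complex_re, Complex.ofReal_re]

lemma ae_mem_Ioo_of_mem_uIoc : ∀ᵐ t : ℝ, t ∈ Ι (0 : ℝ) 1 → t ∈ Ioo (0 : ℝ) 1 := by
  filter_upwards [Measure.ae_ne volume (1 : ℝ)] with t ht1 ht
  rw [uIoc_of_le zero_le_one] at ht
  exact ⟨ht.1, lt_of_le_of_ne ht.2 ht1⟩

section

variable {f : ℂ → ℂ} {r a C : ℝ}

lemma norm_ofReal_mul_le {z : ℂ} (hz : ‖z‖ ≤ 1) {t : ℝ} (ht : 0 ≤ t) : ‖(t : ℂ) * z‖ ≤ t := by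
  rw [norm_mul, Complex.norm_real, Real.norm_of_nonneg ht]
  exact mul_le_of_le_one_right ht hz

lemma ofReal_mul_mem_ball {z : ℂ} (hz : ‖z‖ ≤ 1) {t : ℝ} (ht : t ∈ Ioo (0 : ℝ) 1) :
    (t : ℂ) * z ∈ ball (0 : ℂ) 1 :=
  mem_ball_zero_iff.2 ((norm_ofReal_mul_le hz ht.1.le).trans_lt ht.2)

lemma norm_rpow_mul_ray_le (ha0 : 0 ≤ a)
    (hC : ∀ z ∈ ball (0 : ℂ) 1, ‖f z‖ ≤ C * (1 - ‖z‖) ^ (-a)) {z : ℂ} (hz : ‖z‖ ≤ 1) {t : ℝ}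
    (ht : t ∈ Ioo (0 : ℝ) 1) :
    ‖((t ^ (r - 1) : ℝ) : ℂ) * f (t * z)‖ ≤ |C| * (t ^ (r - 1) * (1 - t) ^ (1 - a - 1)) := by
  have hle := norm_ofReal_mul_le hz ht.1.le
  have hw : 0 ≤ t ^ (r - 1) := Real.rpow_nonneg ht.1.le _
  have hmono : (1 - ‖(t : ℂ) * z‖) ^ (-a) ≤ (1 - t) ^ (-a) :=
    Real.rpow_le_rpow_of_nonpos (by linarith [ht.2]) (by linarith) (by linarith)
  rw [norm_mul, Complex.norm_real, Real.norm_of_nonneg hw, mul_left_comm, sub_right_comm,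
    sub_self, zero_sub]
  refine mul_le_mul_of_nonneg_left ?_ hw
  exact (hC _ (ofReal_mul_mem_ball hz ht)).trans (mul_le_mul (le_abs_self C) hmono
    (Real.rpow_nonneg (by linarith [ht.2]) _) (abs_nonneg C))

lemma aestronglyMeasurable_rpow_mul_ray (hr : 0 < r) (hf : ContinuousOn f (ball 0 1)) {z : ℂ}
    (hz : ‖z‖ ≤ 1) :
    AEStronglyMeasurable (fun t : ℝ => ((t ^ (r - 1) : ℝ) : ℂ) * f (t * z))
      (volume.restrict (Ι 0 1)) :=
  aestronglyMeasurable_ray (intervalIntegrable_rpow_sub_one hr).aestronglyMeasurable_restrict_uIoc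
    (hf.comp (by fun_prop) fun _ ht => ofReal_mul_mem_ball hz ht)

lemma intervalIntegrable_rpow_mul_ray (hr : 0 < r) (ha0 : 0 ≤ a) (ha1 : a < 1)
    (hf : ContinuousOn f (ball 0 1)) (hC : ∀ z ∈ ball (0 : ℂ) 1, ‖f z‖ ≤ C * (1 - ‖z‖) ^ (-a))
    {z : ℂ} (hz : ‖z‖ ≤ 1) :
    IntervalIntegrable (fun t : ℝ => ((t ^ (r - 1) : ℝ) : ℂ) * f (t * z)) volume 0 1 := by
  refine ((intervalIntegrable_beta hr (q := 1 - a) (by linarith)).const_mul |C|).mono_fun'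
    (aestronglyMeasurable_rpow_mul_ray hr hf hz) ?_
  filter_upwards [ae_restrict_of_ae ae_mem_Ioo_of_mem_uIoc, ae_restrict_mem measurableSet_uIoc]
    with t ht' ht using norm_rpow_mul_ray_le ha0 hC hz (ht' ht)

lemma continuousOn_rayIntegral (hr : 0 < r) (ha0 : 0 ≤ a) (ha1 : a < 1)
    (hf : ContinuousOn f (ball 0 1)) (hC : ∀ z ∈ ball (0 : ℂ) 1, ‖f z‖ ≤ C * (1 - ‖z‖) ^ (-a)) :
    ContinuousOn (rayIntegral (fun t => t ^ (r - 1)) f) (closedBall 0 1) := by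
  intro z hz
  refine intervalIntegral.continuousWithinAt_of_dominated_interval
    (bound := fun t => |C| * (t ^ (r - 1) * (1 - t) ^ (1 - a - 1))) ?_ ?_
    ((intervalIntegrable_beta hr (by linarith)).const_mul _) ?_
  · filter_upwards [self_mem_nhdsWithin] with ζ hζ
    exact aestronglyMeasurable_rpow_mul_ray hr hf (mem_closedBall_zero_iff.1 hζ)
  · filter_upwards [self_mem_nhdsWithin] with ζ hζ
    filter_upwards [ae_mem_Ioo_of_mem_uIoc] with t ht' ht
    exact norm_rpow_mul_ray_le ha0 hC (mem_closedBall_zero_iff.1 hζ) (ht' ht)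
  · filter_upwards [ae_mem_Ioo_of_mem_uIoc] with t ht' ht
    have hfc := hf.continuousAt
      (isOpen_ball.mem_nhds (ofReal_mul_mem_ball (mem_closedBall_zero_iff.1 hz) (ht' ht)))
    refine ContinuousAt.continuousWithinAt (continuousAt_const.mul ?_)
    exact ContinuousAt.comp (f := fun ζ : ℂ => (t : ℂ) * ζ) hfc (by fun_prop)

lemma continuous_cexp_mul_rayIntegral (hr : 0 < r) (ha0 : 0 ≤ a) (ha1 : a < 1)
    (hf : ContinuousOn f (ball 0 1)) (hC : ∀ z ∈ ball (0 : ℂ) 1, ‖f z‖ ≤ C * (1 - ‖z‖) ^ (-a)) :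
    Continuous fun y : ℝ =>
      exp (r * y * I) * rayIntegral (fun t => t ^ (r - 1)) f (exp (y * I)) := by
  refine Continuous.mul (by fun_prop) ?_
  exact (continuousOn_rayIntegral hr ha0 ha1 hf hC).comp_continuous (by fun_prop)
    fun y => by simp [Complex.norm_exp_ofReal_mul_I]

end

/-! ### The elliptic integral on the cut plane -/

/-- The complement in `ℂ` of the ray `[1, ∞)`. -/
def cutPlane : Set ℂ := {z | 1 - z ∈ Complex.slitPlane}

lemma mem_cutPlane {z : ℂ} : z ∈ cutPlane ↔ 1 - z ∈ Complex.slitPlane := Iff.rfl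

lemma isOpen_cutPlane : IsOpen cutPlane :=
  Complex.isOpen_slitPlane.preimage (by fun_prop)

lemma starConvex_cutPlane : StarConvex ℝ 0 cutPlane := by
  intro z hz a b ha hb hab
  have h := Complex.starConvex_one_slitPlane hz ha hb hab
  have e : 1 - (a • (0 : ℂ) + b • z) = a • (1 : ℂ) + b • (1 - z) := by
    have hab' : (a : ℂ) + b = 1 := by exact_mod_cast hab
    simp only [Complex.real_smul]
    linear_combination -hab'
  rwa [mem_cutPlane, e]

lemma mem_cutPlane_of_norm_le_one {z : ℂ} (hz : ‖z‖ ≤ 1) (h1 : z ≠ 1) : z ∈ cutPlane := by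
  rw [mem_cutPlane, Complex.mem_slitPlane_iff]
  by_contra! h
  obtain ⟨hre, him⟩ := h
  have h2 := (Complex.re_le_norm z).trans hz
  rw [Complex.sub_re, Complex.one_re] at hre
  exact h1 (Complex.ext (by simp; linarith) (by simpa using him))

lemma ball_subset_cutPlane : ball 0 1 ⊆ cutPlane := fun z hz => by
  rw [mem_ball_zero_iff] at hz
  exact mem_cutPlane_of_norm_le_one hz.le fun h => by simp [h] at hz

lemma norm_one_sub_cexp {y : ℝ} (h0 : 0 ≤ y) (h1 : y ≤ 2 * π) :
    ‖1 - exp (y * I)‖ = 2 * Real.sin (y / 2) := by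
  have hs : 0 ≤ Real.sin (y / 2) := Real.sin_nonneg_of_nonneg_of_le_pi (by linarith) (by linarith)
  rw [norm_sub_rev, mul_comm, Complex.norm_exp_I_mul_ofReal_sub_one,
    Real.norm_of_nonneg (by positivity)]

lemma cexp_mem_cutPlane {y : ℝ} (h0 : 0 < y) (h1 : y < 2 * π) : exp (y * I) ∈ cutPlane := by
  refine mem_cutPlane_of_norm_le_one (Complex.norm_exp_ofReal_mul_I y).le fun h => ?_
  have h2 := norm_one_sub_cexp h0.le h1.le
  have hs := Real.sin_pos_of_pos_of_lt_pi (x := y / 2) (by linarith) (by linarith)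
  rw [h, sub_self, norm_zero] at h2
  linarith

/-- The principal branch of `(1 - z)^(-1/2)`, holomorphic on `cutPlane`. -/
noncomputable def invSqrtOneSub (z : ℂ) : ℂ := (1 - z) ^ (-(1 / 2) : ℂ)

lemma differentiableOn_invSqrtOneSub : DifferentiableOn ℂ invSqrtOneSub cutPlane := fun _ hz =>
  ((differentiableAt_id.const_sub 1).cpow_const hz).differentiableWithinAt

lemma norm_invSqrtOneSub (z : ℂ) : ‖invSqrtOneSub z‖ = ‖1 - z‖ ^ (-(1 / 2) : ℝ) := by
  rw [invSqrtOneSub, show (-(1 / 2) : ℂ) = ((-(1 / 2) : ℝ) : ℂ) by push_cast; rfl,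
    Complex.norm_cpow_real]

lemma invSqrtOneSub_ofReal {x : ℝ} (hx : x ≤ 1) :
    invSqrtOneSub x = ((1 - x) ^ (-(1 / 2) : ℝ) : ℝ) := by
  rw [invSqrtOneSub, Complex.ofReal_cpow (by linarith)]
  push_cast
  rfl

lemma invSqrtOneSub_conj {z : ℂ} (hz : z ∈ cutPlane) :
    invSqrtOneSub (conj z) = conj (invSqrtOneSub z) := by
  have h : 1 - conj z = conj (1 - z) := by simp
  rw [invSqrtOneSub, h, Complex.conj_cpow _ _ (Complex.mem_slitPlane_iff_arg.1 hz).1, invSqrtOneSub]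
  simp [map_ofNat]

lemma invSqrtOneSub_cexp {y : ℝ} (h0 : 0 < y) (h1 : y < 2 * π) :
    invSqrtOneSub (exp (y * I)) =
      ((2 * Real.sin (y / 2)) ^ (-(1 / 2) : ℝ) : ℝ) * exp (((π - y) / 4 : ℝ) * I) := by
  have hs : 0 < 2 * Real.sin (y / 2) :=
    mul_pos two_pos (Real.sin_pos_of_pos_of_lt_pi (by linarith) (by linarith))
  have hz : 1 - exp (y * I) =
      exp ((Real.log (2 * Real.sin (y / 2)) : ℝ) + ((y - π) / 2 : ℝ) * I) := by
    have hy : y = 2 * (y / 2) := by ring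
    rw [Complex.exp_add, ← Complex.ofReal_exp, Real.exp_log hs]
    apply Complex.ext
    · rw [Complex.re_ofReal_mul, Complex.sub_re, Complex.exp_ofReal_mul_I_re,
        Complex.exp_ofReal_mul_I_re, sub_div, Real.cos_sub_pi_div_two, Complex.one_re]
      nth_rw 1 [hy]
      rw [Real.cos_two_mul']
      linear_combination -Real.sin_sq_add_cos_sq (y / 2)
    · rw [Complex.im_ofReal_mul, Complex.sub_im, Complex.exp_ofReal_mul_I_im,
        Complex.exp_ofReal_mul_I_im, sub_div, Real.sin_sub_pi_div_two, Complex.one_im]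
      nth_rw 1 [hy]
      rw [Real.sin_two_mul]
      ring
  rw [invSqrtOneSub, hz, Complex.cpow_def_of_ne_zero (Complex.exp_ne_zero _), Complex.log_exp,
    Real.rpow_def_of_pos hs, Complex.ofReal_exp, ← Complex.exp_add]
  · congr 1
    push_cast
    ring
  · simp
    linarith [Real.pi_pos]
  · simp
    linarith [Real.pi_pos]

lemma one_sub_le_norm_one_sub_ofReal_mul {z : ℂ} (hz : ‖z‖ ≤ 1) {t : ℝ} (ht : 0 ≤ t) :
    1 - t ≤ ‖1 - t * z‖ := by
  have h := norm_sub_norm_le (1 : ℂ) (t * z)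
  rw [norm_one, norm_mul, Complex.norm_real, Real.norm_of_nonneg ht] at h
  nlinarith

lemma norm_one_sub_le_two_mul {z : ℂ} (hz : ‖z‖ ≤ 1) {t : ℝ} (ht : t ∈ Icc (0 : ℝ) 1) :
    ‖1 - z‖ ≤ 2 * ‖1 - t * z‖ := by
  have h1 := one_sub_le_norm_one_sub_ofReal_mul hz ht.1
  have h2 : ‖(1 - t : ℂ) * z‖ ≤ 1 - t := by
    rw [norm_mul, ← Complex.ofReal_one, ← Complex.ofReal_sub, Complex.norm_real,
      Real.norm_of_nonneg (by linarith [ht.2])]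
    exact mul_le_of_le_one_right (by linarith [ht.2]) hz
  calc ‖1 - z‖ = ‖(1 - t * z) - (1 - t : ℂ) * z‖ := by ring_nf
    _ ≤ ‖1 - t * z‖ + ‖(1 - t : ℂ) * z‖ := norm_sub_le _ _
    _ ≤ 2 * ‖1 - t * z‖ := by linarith

/-- The complete elliptic integral of the first kind as a function of the parameter `m = k²`,
in the form `K(m) = ½ ∫₀¹ (t (1 - t) (1 - m t))^(-1/2) dt`. -/
noncomputable def ellipticK (m : ℂ) : ℂ :=
  1 / 2 * rayIntegral (fun t => t ^ (-(1 / 2) : ℝ) * (1 - t) ^ (-(1 / 2) : ℝ)) invSqrtOneSub m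

lemma differentiableOn_ellipticK : DifferentiableOn ℂ ellipticK cutPlane := fun m hm => by
  have hw := intervalIntegrable_beta (p := 1 / 2) (q := 1 / 2) (by norm_num) (by norm_num)
  norm_num only [] at hw
  exact ((hasDerivAt_rayIntegral isOpen_cutPlane starConvex_cutPlane differentiableOn_invSqrtOneSub
    hw hm).differentiableAt.const_mul (1 / 2)).differentiableWithinAt

lemma norm_invSqrtOneSub_ofReal_mul_le {m : ℂ} (hm : ‖m‖ ≤ 1) (hm1 : m ≠ 1) {t : ℝ}
    (ht : t ∈ Ioo (0 : ℝ) 1) :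
    ‖invSqrtOneSub (t * m)‖ ≤ (1 - t) ^ (-(1 / 4) : ℝ) * (‖1 - m‖ / 2) ^ (-(1 / 4) : ℝ) := by
  have h1 := one_sub_le_norm_one_sub_ofReal_mul hm ht.1.le
  have h2 := norm_one_sub_le_two_mul hm (Ioo_subset_Icc_self ht)
  have h3 : 0 < ‖1 - m‖ := norm_pos_iff.2 (sub_ne_zero.2 hm1.symm)
  have h4 : 0 < ‖1 - t * m‖ := by linarith
  rw [norm_invSqrtOneSub, show (-(1 / 2) : ℝ) = -(1 / 4) + -(1 / 4) by norm_num, Real.rpow_add h4]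
  exact mul_le_mul (Real.rpow_le_rpow_of_nonpos (by linarith [ht.2]) h1 (by norm_num))
    (Real.rpow_le_rpow_of_nonpos (by linarith) (by linarith) (by norm_num)) (by positivity)
    (Real.rpow_nonneg (by linarith [ht.2]) _)

lemma exists_norm_ellipticK_le : ∃ C, ∀ m : ℂ, ‖m‖ ≤ 1 → m ≠ 1 →
    ‖ellipticK m‖ ≤ C * ‖1 - m‖ ^ (-(1 / 4) : ℝ) := by
  have hw := intervalIntegrable_beta (p := 1 / 2) (q := 1 / 4) (by norm_num) (by norm_num)
  set J := ∫ t in (0 : ℝ)..1, t ^ (1 / 2 - 1 : ℝ) * (1 - t) ^ (1 / 4 - 1 : ℝ)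
  refine ⟨1 / 2 * (J / 2 ^ (-(1 / 4) : ℝ)), fun m hm hm1 => ?_⟩
  have hle : ‖rayIntegral (fun t => t ^ (-(1 / 2) : ℝ) * (1 - t) ^ (-(1 / 2) : ℝ)) invSqrtOneSub m‖
      ≤ ∫ t in (0 : ℝ)..1, t ^ (1 / 2 - 1 : ℝ) * (1 - t) ^ (1 / 4 - 1 : ℝ) *
        (‖1 - m‖ / 2) ^ (-(1 / 4) : ℝ) := by
    refine intervalIntegral.norm_integral_le_of_norm_le zero_le_one ?_ (hw.mul_const _)
    filter_upwards [ae_mem_Ioo_of_mem_uIoc] with t ht' ht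
    rw [← uIoc_of_le zero_le_one] at ht
    replace ht := ht' ht
    have h1t : 0 < 1 - t := by linarith [ht.2]
    have hw0 : 0 ≤ t ^ (-(1 / 2) : ℝ) * (1 - t) ^ (-(1 / 2) : ℝ) :=
      mul_nonneg (Real.rpow_nonneg ht.1.le _) (Real.rpow_nonneg h1t.le _)
    rw [norm_mul, Complex.norm_real, Real.norm_of_nonneg hw0]
    refine (mul_le_mul_of_nonneg_left (norm_invSqrtOneSub_ofReal_mul_le hm hm1 ht) hw0).trans_eq ?_
    rw [show (1 / 4 - 1 : ℝ) = -(1 / 2) + -(1 / 4) by norm_num, Real.rpow_add h1t,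
      show (1 / 2 - 1 : ℝ) = -(1 / 2) by norm_num]
    ring
  rw [intervalIntegral.integral_mul_const, Real.div_rpow (norm_nonneg _) two_pos.le] at hle
  rw [ellipticK, norm_mul, show ‖(1 / 2 : ℂ)‖ = 1 / 2 by norm_num]
  linear_combination 1 / 2 * hle

lemma ellipticK_ofReal {x : ℝ} (hx : x ≤ 1) : ellipticK x = ((1 / 2 * ∫ t in (0 : ℝ)..1,
    t ^ (-(1 / 2) : ℝ) * (1 - t) ^ (-(1 / 2) : ℝ) * (1 - t * x) ^ (-(1 / 2) : ℝ) : ℝ) : ℂ) := by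
  rw [ellipticK, rayIntegral, Complex.ofReal_mul, ← intervalIntegral.integral_ofReal]
  push_cast
  congr 1
  refine intervalIntegral.integral_congr fun t ht => ?_
  rw [uIcc_of_le zero_le_one] at ht
  rw [← Complex.ofReal_mul t x, invSqrtOneSub_ofReal (by nlinarith [ht.1, ht.2])]

/-! ### Mellin moments and the hypergeometric series -/

lemma integral_beta {p q : ℝ} (hp : 0 < p) (hq : 0 < q) :
    ∫ t in (0 : ℝ)..1, t ^ (p - 1) * (1 - t) ^ (q - 1) = betaFn p q := by
  rw [← Complex.ofReal_inj, ← intervalIntegral.integral_ofReal, ofReal_betaFn hp hq,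
    Complex.betaIntegral]
  refine intervalIntegral.integral_congr_ae ?_
  filter_upwards [ae_mem_Ioo_of_mem_uIoc] with t ht' ht
  exact (betaIntegrand_eq_ofReal (ht' ht)).symm

lemma hasSum_mul_betaFn {a : ℕ → ℝ} {g : ℝ → ℝ} {p q : ℝ} (hp : 0 < p) (hq : 0 < q)
    (ha : ∀ k, 0 ≤ a k) (hg : ∀ t ∈ Ioo (0 : ℝ) 1, HasSum (fun k => a k * t ^ k) (g t))
    (hint : IntervalIntegrable (fun t => t ^ (p - 1) * (1 - t) ^ (q - 1) * g t) volume 0 1) :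
    HasSum (fun k : ℕ => a k * betaFn (p + k) q)
      (∫ t in (0 : ℝ)..1, t ^ (p - 1) * (1 - t) ^ (q - 1) * g t) := by
  have hterm : ∀ k : ℕ, ∫ t in (0 : ℝ)..1, a k * (t ^ (p + k - 1) * (1 - t) ^ (q - 1)) =
      a k * betaFn (p + k) q := fun k => by
    rw [intervalIntegral.integral_const_mul, integral_beta (by positivity) hq]
  have hsum : ∀ t ∈ Ioo (0 : ℝ) 1, HasSum (fun k : ℕ => a k * (t ^ (p + k - 1) * (1 - t) ^ (q - 1)))
      (t ^ (p - 1) * (1 - t) ^ (q - 1) * g t) := fun t ht => by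
    refine ((hg t ht).mul_left (t ^ (p - 1) * (1 - t) ^ (q - 1))).congr_fun fun k => ?_
    rw [add_sub_right_comm, Real.rpow_add ht.1, Real.rpow_natCast]
    ring
  simp_rw [← hterm]
  refine intervalIntegral.hasSum_integral_of_dominated_convergence
    (fun (k : ℕ) t => a k * (t ^ (p + k - 1) * (1 - t) ^ (q - 1))) (fun k => ?_) (fun k => ?_) ?_
    (hint.congr_uIoo fun t ht => ?_) ?_
  · exact ((intervalIntegrable_beta (by positivity) hq).const_mul
      (a k)).aestronglyMeasurable_restrict_uIoc
  · filter_upwards [ae_mem_Ioo_of_mem_uIoc] with t ht' ht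
    replace ht := ht' ht
    have h1t : 0 ≤ 1 - t := by linarith [ht.2]
    exact (Real.norm_of_nonneg (mul_nonneg (ha k) (mul_nonneg (Real.rpow_nonneg ht.1.le _)
      (Real.rpow_nonneg h1t _)))).le
  · filter_upwards [ae_mem_Ioo_of_mem_uIoc] with t ht' ht using (hsum t (ht' ht)).summable
  · rw [uIoo_of_le zero_le_one] at ht
    exact (hsum t ht).tsum_eq.symm
  · filter_upwards [ae_mem_Ioo_of_mem_uIoc] with t ht' ht using hsum t (ht' ht)

lemma poch_succ (x : ℝ) (k : ℕ) : poch x (k + 1) = poch x k * (x + k) := by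
  rw [poch, poch, Finset.prod_range_succ]

lemma poch_pos {x : ℝ} (hx : 0 < x) (k : ℕ) : 0 < poch x k := by
  unfold poch
  positivity

lemma poch_one (k : ℕ) : poch 1 k = (Nat.factorial k : ℝ) := by
  rw [poch, ← Finset.prod_range_add_one_eq_factorial]
  push_cast
  exact Finset.prod_congr rfl fun _ _ => add_comm _ _

lemma gamma_add_natCast {x : ℝ} (hx : 0 < x) (k : ℕ) :
    Real.Gamma (x + k) = poch x k * Real.Gamma x := by
  induction k with
  | zero => simp [poch]
  | succ k ih =>
    have : x + k ≠ 0 := by positivity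
    rw [poch_succ, Nat.cast_succ, ← add_assoc, Real.Gamma_add_one this, ih]
    ring

lemma betaFn_add_natCast {p q : ℝ} (hp : 0 < p) (hq : 0 < q) (k : ℕ) :
    betaFn (p + k) q = poch p k / poch (p + q) k * betaFn p q := by
  have := poch_pos (add_pos hp hq) k
  have := Real.Gamma_pos_of_pos (add_pos hp hq)
  rw [betaFn, betaFn, add_right_comm, gamma_add_natCast hp, gamma_add_natCast (add_pos hp hq)]
  field_simp

lemma eval_ascPochhammer_eq_poch (x : ℝ) (k : ℕ) : (ascPochhammer ℝ k).eval x = poch x k := by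
  induction k with
  | zero => simp [poch]
  | succ k ih => rw [ascPochhammer_succ_eval, ih, poch_succ]

lemma ringChoose_eq_poch_div_factorial (p : ℝ) (k : ℕ) :
    Ring.choose (p + k - 1) k = poch p k / k.factorial := by
  have h := Ring.factorial_nsmul_multichoose_eq_ascPochhammer p k
  rw [Polynomial.ascPochhammer_smeval_eq_eval, eval_ascPochhammer_eq_poch, nsmul_eq_mul] at h
  rw [eq_div_iff (by positivity), ← h, mul_comm, Ring.choose]
  ring_nf

lemma hasSum_one_sub_rpow_neg (p : ℝ) {x : ℝ} (hx : |x| < 1) :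
    HasSum (fun k : ℕ => poch p k / k.factorial * x ^ k) ((1 - x) ^ (-p)) := by
  have h := (Real.one_div_one_sub_rpow_hasFPowerSeriesOnBall_zero p).hasSum
    (y := x) (by simpa [enorm_eq_nnnorm, ← NNReal.coe_lt_coe] using hx)
  simp only [FormalMultilinearSeries.ofScalars_apply_eq, zero_add, ringChoose_eq_poch_div_factorial,
    smul_eq_mul] at h
  rwa [Real.rpow_neg (by linarith [le_abs_self x]), ← one_div]

lemma betaFn_half_half : betaFn (1 / 2) (1 / 2) = π := by
  rw [betaFn, Real.Gamma_one_half_eq, add_halves, Real.Gamma_one, div_one,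
    Real.mul_self_sqrt Real.pi_pos.le]

lemma hasSum_ellipticK {x : ℝ} (hx : x ∈ Ioo (0 : ℝ) 1) :
    HasSum (fun k : ℕ => (poch (1 / 2) k / k.factorial) ^ 2 * x ^ k)
      (2 / π * (ellipticK x).re) := by
  have hbeta := intervalIntegrable_beta (p := 1 / 2) (q := 1 / 2) (by norm_num) (by norm_num)
  have hint : IntervalIntegrable (fun t : ℝ => t ^ (1 / 2 - 1 : ℝ) * (1 - t) ^ (1 / 2 - 1 : ℝ) *
      (1 - t * x) ^ (-(1 / 2) : ℝ)) volume 0 1 := by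
    refine hbeta.mul_continuousOn (ContinuousOn.rpow_const (by fun_prop) fun t ht => .inl ?_)
    rw [uIcc_of_le zero_le_one] at ht
    nlinarith [ht.1, ht.2, hx.1, hx.2]
  have hser : ∀ t ∈ Ioo (0 : ℝ) 1,
      HasSum (fun k : ℕ => poch (1 / 2) k / k.factorial * x ^ k * t ^ k)
        ((1 - t * x) ^ (-(1 / 2) : ℝ)) := fun t ht => by
    refine (hasSum_one_sub_rpow_neg (1 / 2) (x := t * x) ?_).congr_fun fun k => ?_
    · rw [abs_of_pos (mul_pos ht.1 hx.1)]
      nlinarith [ht.1, ht.2, hx.1, hx.2]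
    · ring
  have h := (hasSum_mul_betaFn (by norm_num) (by norm_num) (fun k => ?_) hser hint).mul_left π⁻¹
  · rw [show (1 / 2 - 1 : ℝ) = -(1 / 2) by norm_num] at h
    rw [ellipticK_ofReal hx.2.le, Complex.ofReal_re, ← mul_assoc,
      show 2 / π * (1 / 2) = π⁻¹ by field_simp]
    refine h.congr_fun fun k => ?_
    rw [betaFn_add_natCast (by norm_num) (by norm_num), betaFn_half_half, add_halves, poch_one]
    field_simp
  · have := poch_pos (x := 1 / 2) (by norm_num) k
    have := hx.1
    positivity

lemma norm_le_mul_one_sub_norm_rpow {f : ℂ → ℂ} {a C : ℝ} (ha0 : 0 ≤ a)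
    (hC : ∀ z : ℂ, ‖z‖ ≤ 1 → z ≠ 1 → ‖f z‖ ≤ C * ‖1 - z‖ ^ (-a)) :
    ∀ z ∈ ball (0 : ℂ) 1, ‖f z‖ ≤ |C| * (1 - ‖z‖) ^ (-a) := fun z hz => by
  rw [mem_ball_zero_iff] at hz
  have h : 1 - ‖z‖ ≤ ‖1 - z‖ := by simpa using norm_sub_norm_le 1 z
  refine (hC z hz.le fun h => by simp [h] at hz).trans (mul_le_mul (le_abs_self C) ?_
    (by positivity) (abs_nonneg C))
  exact Real.rpow_le_rpow_of_nonpos (by linarith) h (by linarith)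

/-- The generating function whose Mellin moments along `[0, 1]` are the values `betaF`. -/
noncomputable def ellipticGen (z : ℂ) : ℂ := invSqrtOneSub z * ellipticK z

lemma differentiableOn_ellipticGen : DifferentiableOn ℂ ellipticGen cutPlane :=
  differentiableOn_invSqrtOneSub.mul differentiableOn_ellipticK

lemma exists_norm_ellipticGen_le : ∃ C, ∀ z : ℂ, ‖z‖ ≤ 1 → z ≠ 1 →
    ‖ellipticGen z‖ ≤ C * ‖1 - z‖ ^ (-(3 / 4) : ℝ) := by
  obtain ⟨C, hC⟩ := exists_norm_ellipticK_le
  refine ⟨C, fun z hz hz1 => ?_⟩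
  have h : 0 < ‖1 - z‖ := norm_pos_iff.2 (sub_ne_zero.2 hz1.symm)
  rw [ellipticGen, norm_mul, norm_invSqrtOneSub,
    show (-(3 / 4) : ℝ) = -(1 / 2) + -(1 / 4) by norm_num, Real.rpow_add h, mul_left_comm]
  exact mul_le_mul_of_nonneg_left (hC z hz hz1) (by positivity)

/-- The product `B(r, 1/2) ₃F₂(1/2, 1/2, r; 1, r + 1/2; 1)`. -/
noncomputable def betaF (r : ℝ) : ℝ :=
  betaFn r (1 / 2) * threeF2 (1 / 2) (1 / 2) r 1 (r + 1 / 2)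

lemma ellipticGen_ofReal {x : ℝ} (hx : x ≤ 1) :
    ellipticGen x = (((1 - x) ^ (-(1 / 2) : ℝ) * (ellipticK x).re : ℝ) : ℂ) := by
  have h : (((ellipticK x).re : ℝ) : ℂ) = ellipticK x := by
    rw [ellipticK_ofReal hx, Complex.ofReal_re]
  rw [ellipticGen, invSqrtOneSub_ofReal hx, Complex.ofReal_mul, h]

lemma intervalIntegrable_rpow_mul_ellipticK {r : ℝ} (hr : 0 < r) :
    IntervalIntegrable (fun t : ℝ => t ^ (r - 1) * (1 - t) ^ (1 / 2 - 1 : ℝ) * (ellipticK t).re)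
      volume 0 1 := by
  obtain ⟨C, hC⟩ := exists_norm_ellipticGen_le
  have h := intervalIntegrable_rpow_mul_ray hr (by norm_num) (by norm_num)
    (differentiableOn_ellipticGen.continuousOn.mono ball_subset_cutPlane)
    (norm_le_mul_one_sub_norm_rpow (by norm_num) hC) norm_one.le
  refine (intervalIntegrable_iff.2 (intervalIntegrable_iff.1 h).re).congr_uIoo fun t ht => ?_
  rw [uIoo_of_le zero_le_one] at ht
  simp only [mul_one]
  rw [ellipticGen_ofReal ht.2.le, ← Complex.ofReal_mul, RCLike.re_eq_complex_re, Complex.ofReal_re]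
  norm_num [mul_assoc]

lemma hasSum_mul_betaFn_ellipticK {r : ℝ} (hr : 0 < r) :
    HasSum (fun k : ℕ => (poch (1 / 2) k / k.factorial) ^ 2 * betaFn (r + k) (1 / 2))
      (2 / π * ∫ t in (0 : ℝ)..1, t ^ (r - 1) * (1 - t) ^ (1 / 2 - 1 : ℝ) * (ellipticK t).re) := by
  have h := hasSum_mul_betaFn (a := fun k : ℕ => (poch (1 / 2) k / k.factorial) ^ 2)
    (q := 1 / 2) hr (by norm_num) (fun k => sq_nonneg _) (fun t ht => hasSum_ellipticK ht)
    (((intervalIntegrable_rpow_mul_ellipticK hr).const_mul (2 / π)).congr_uIoo fun t _ => by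
      simp only; ring)
  rw [← intervalIntegral.integral_const_mul]
  simpa only [mul_left_comm] using h

lemma betaF_eq_integral {r : ℝ} (hr : 0 < r) : betaF r =
    2 / π * ∫ t in (0 : ℝ)..1, t ^ (r - 1) * (1 - t) ^ (1 / 2 - 1 : ℝ) * (ellipticK t).re := by
  rw [← (hasSum_mul_betaFn_ellipticK hr).tsum_eq, betaF, threeF2, ← tsum_mul_left]
  refine tsum_congr fun k => ?_
  rw [betaFn_add_natCast hr (by norm_num), poch_one]
  have := poch_pos (x := r + 1 / 2) (by positivity) k
  field_simp

lemma rayIntegral_ellipticGen_one {r : ℝ} (hr : 0 < r) :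
    rayIntegral (fun t => t ^ (r - 1)) ellipticGen 1 = (π / 2 * betaF r : ℝ) := by
  rw [betaF_eq_integral hr, ← mul_assoc, show π / 2 * (2 / π) = 1 by field_simp, one_mul,
    ← intervalIntegral.integral_ofReal, rayIntegral]
  refine intervalIntegral.integral_congr fun t ht => ?_
  rw [uIcc_of_le zero_le_one] at ht
  simp only [mul_one]
  rw [ellipticGen_ofReal ht.2, ← Complex.ofReal_mul]
  norm_num [mul_assoc]

/-! ### Moments along the unit circle -/

lemma four_mul_mul_one_sub_le_norm_one_sub_cexp {u : ℝ} (hu : u ∈ Icc (0 : ℝ) 1) :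
    4 * (u * (1 - u)) ≤ ‖1 - exp ((2 * π * u : ℝ) * I)‖ := by
  have hpi := Real.pi_pos
  have hsin : ∀ v ∈ Icc (0 : ℝ) (1 / 2), 2 * v ≤ Real.sin (π * v) := fun v hv => by
    have h := Real.mul_le_sin (x := π * v) (mul_nonneg hpi.le hv.1) (by nlinarith [hv.2])
    rwa [← mul_assoc, div_mul_cancel₀ _ hpi.ne'] at h
  rw [norm_one_sub_cexp (by nlinarith [hu.1]) (by nlinarith [hu.2]),
    show 2 * π * u / 2 = π * u by ring]
  rcases le_total u (1 / 2) with h | h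
  · nlinarith [hsin u ⟨hu.1, h⟩, hu.1]
  · have h2 := hsin (1 - u) ⟨by linarith [hu.2], by linarith⟩
    rw [show π * (1 - u) = π - π * u by ring, Real.sin_pi_sub] at h2
    nlinarith [hu.2]

section

variable {f : ℂ → ℂ} {a C : ℝ}

lemma intervalIntegrable_cexp_mul_circle (r : ℝ) (ha0 : 0 ≤ a) (ha1 : a < 1)
    (hf : ContinuousOn f cutPlane)
    (hC : ∀ z : ℂ, ‖z‖ ≤ 1 → z ≠ 1 → ‖f z‖ ≤ C * ‖1 - z‖ ^ (-a)) :
    IntervalIntegrable (fun y : ℝ => exp (r * y * I) * f (exp (y * I))) volume 0 (2 * π) := by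
  have hpi := Real.pi_pos
  have hmem : ∀ u ∈ Ioo (0 : ℝ) 1, exp ((2 * π * u : ℝ) * I) ∈ cutPlane := fun u hu =>
    cexp_mem_cutPlane (by have := hu.1; positivity) (by nlinarith [hu.2])
  suffices h : IntervalIntegrable (fun u : ℝ => exp (r * (2 * π * u : ℝ) * I) *
      f (exp ((2 * π * u : ℝ) * I))) volume 0 1 by
    have := (IntervalIntegrable.comp_mul_left_iff (f := fun y : ℝ => exp (r * y * I) *
      f (exp (y * I))) (a := 0) (b := 2 * π) (c := 2 * π) (by positivity) enorm_ne_top).1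
    refine this ?_
    rwa [zero_div, div_self (by positivity)]
  refine (((intervalIntegrable_beta (p := 1 - a) (q := 1 - a) (by linarith)
    (by linarith)).const_mul |C|)).mono_fun' ?_ ?_
  · rw [uIoc_of_le zero_le_one, ← Measure.restrict_congr_set Ioo_ae_eq_Ioc]
    exact ((by fun_prop : Continuous fun u : ℝ => exp (r * (2 * π * u : ℝ) * I)).continuousOn.mul
      (hf.comp (by fun_prop) hmem)).aestronglyMeasurable measurableSet_Ioo
  · filter_upwards [ae_restrict_of_ae ae_mem_Ioo_of_mem_uIoc, ae_restrict_mem measurableSet_uIoc]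
      with u hu' hu
    replace hu := hu' hu
    have hlow := four_mul_mul_one_sub_le_norm_one_sub_cexp (Ioo_subset_Icc_self hu)
    have hpos : 0 < u * (1 - u) := mul_pos hu.1 (by linarith [hu.2])
    have hne : exp ((2 * π * u : ℝ) * I) ≠ 1 := fun h => by
      rw [h, sub_self, norm_zero] at hlow
      linarith
    rw [norm_mul, ← Complex.ofReal_mul r, Complex.norm_exp_ofReal_mul_I, one_mul, sub_right_comm,
      sub_self, zero_sub, ← Real.mul_rpow hu.1.le (by linarith [hu.2])]
    exact (hC _ (Complex.norm_exp_ofReal_mul_I _).le hne).trans (mul_le_mul (le_abs_self C)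
      (Real.rpow_le_rpow_of_nonpos hpos (by linarith) (by linarith)) (by positivity)
      (abs_nonneg C))

lemma I_mul_integral_circle_eq_mul_rayIntegral {r : ℝ} (hr : 0 < r) (ha0 : 0 ≤ a) (ha1 : a < 1)
    (hf : DifferentiableOn ℂ f cutPlane)
    (hC : ∀ z : ℂ, ‖z‖ ≤ 1 → z ≠ 1 → ‖f z‖ ≤ C * ‖1 - z‖ ^ (-a)) :
    I * ∫ y in (0 : ℝ)..(2 * π), exp (r * y * I) * f (exp (y * I)) =
      (exp (2 * π * r * I) - 1) * rayIntegral (fun t => t ^ (r - 1)) f 1 := by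
  rw [← intervalIntegral.integral_const_mul,
    intervalIntegral.integral_eq_sub_of_hasDerivAt_of_le (by positivity)
      (continuous_cexp_mul_rayIntegral hr ha0 ha1 (hf.continuousOn.mono ball_subset_cutPlane)
        (norm_le_mul_one_sub_norm_rpow ha0 hC)).continuousOn
      (fun y hy => hasDerivAt_cexp_mul_rayIntegral isOpen_cutPlane starConvex_cutPlane hf hr
        (cexp_mem_cutPlane hy.1 hy.2))
      ((intervalIntegrable_cexp_mul_circle r ha0 ha1 hf.continuousOn hC).const_mul I)]
  have h1 : exp ((2 * π : ℝ) * I) = 1 := by rw [Complex.ofReal_mul]; exact Complex.exp_two_pi_mul_I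
  rw [h1, Complex.ofReal_zero, mul_zero, zero_mul, Complex.exp_zero, sub_mul]
  push_cast
  ring_nf

end

/-- The boundary values of `ellipticGen` at `exp (4 i φ)`, up to a constant and an exponential
factor. -/
noncomputable def ellipticArc (φ : ℝ) : ℂ :=
  (Real.sin (2 * φ) ^ (-(1 / 2) : ℝ) : ℝ) * (exp (φ * I) * ellipticK (exp ((4 * φ : ℝ) * I)))

lemma cexp_mul_ellipticArc (r : ℝ) {φ : ℝ} (h0 : 0 < φ) (h1 : φ < π / 2) :
    exp ((4 * r - 2) * φ * I) * ellipticArc φ = √2 * exp (-(π / 4) * I) *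
      (exp (r * (4 * φ : ℝ) * I) * ellipticGen (exp ((4 * φ : ℝ) * I))) := by
  have hs : 0 < Real.sin (2 * φ) := Real.sin_pos_of_pos_of_lt_pi (by linarith) (by linarith)
  have h2 : √2 * (2 * Real.sin (2 * φ)) ^ (-(1 / 2) : ℝ) = Real.sin (2 * φ) ^ (-(1 / 2) : ℝ) := by
    rw [Real.mul_rpow two_pos.le hs.le, Real.rpow_neg two_pos.le, ← Real.sqrt_eq_rpow,
      ← mul_assoc, mul_inv_cancel₀ (by positivity), one_mul]
  have e : exp ((4 * r - 2) * φ * I) * exp (φ * I) = exp (-(π / 4) * I) *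
      (exp (r * (4 * φ : ℝ) * I) * exp (((π - 4 * φ) / 4 : ℝ) * I)) := by
    rw [← Complex.exp_add, ← Complex.exp_add, ← Complex.exp_add]
    congr 1
    push_cast
    ring
  rw [ellipticArc, ellipticGen, invSqrtOneSub_cexp (by linarith) (by linarith),
    show 4 * φ / 2 = 2 * φ by ring, ← h2, Complex.ofReal_mul]
  linear_combination (√2 * ((2 * Real.sin (2 * φ)) ^ (-(1 / 2) : ℝ) : ℝ) *
    ellipticK (exp ((4 * φ : ℝ) * I))) * e

lemma ae_mem_Ioo_zero_pi_div_two : ∀ᵐ φ : ℝ, φ ∈ Ι 0 (π / 2) → φ ∈ Ioo 0 (π / 2) := by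
  filter_upwards [Measure.ae_ne volume (π / 2)] with φ h hφ
  rw [uIoc_of_le Real.pi_div_two_pos.le] at hφ
  exact ⟨hφ.1, lt_of_le_of_ne hφ.2 h⟩

lemma intervalIntegrable_cexp_mul_ellipticArc (r : ℝ) :
    IntervalIntegrable (fun φ => exp ((4 * r - 2) * φ * I) * ellipticArc φ) volume 0 (π / 2) := by
  obtain ⟨C, hC⟩ := exists_norm_ellipticGen_le
  have h := ((intervalIntegrable_cexp_mul_circle r (by norm_num) (by norm_num)
    differentiableOn_ellipticGen.continuousOn hC).comp_mul_left (c := 4)).const_mul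
      (√2 * exp (-(π / 4) * I))
  rw [zero_div, show 2 * π / 4 = π / 2 by ring] at h
  refine h.congr_uIoo fun φ hφ => ?_
  rw [uIoo_of_le Real.pi_div_two_pos.le] at hφ
  exact (cexp_mul_ellipticArc r hφ.1 hφ.2).symm

lemma integral_cexp_mul_ellipticArc {r : ℝ} (hr : 0 < r) :
    ∫ φ in (0 : ℝ)..(π / 2), exp ((4 * r - 2) * φ * I) * ellipticArc φ =
      (π * √2 / 4 * Real.sin (π * r) * betaF r : ℝ) * exp ((π * r - π / 4 : ℝ) * I) := by
  obtain ⟨C, hC⟩ := exists_norm_ellipticGen_le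
  have hshift := I_mul_integral_circle_eq_mul_rayIntegral hr (by norm_num) (by norm_num)
    differentiableOn_ellipticGen hC
  have hexp : exp (2 * π * r * I) - 1 = 2 * I * Complex.sin (π * r) * exp (π * r * I) := by
    rw [Complex.sin, show 2 * (π : ℂ) * r * I = π * r * I + π * r * I by ring, Complex.exp_add,
      neg_mul, Complex.exp_neg]
    have := Complex.exp_ne_zero (π * r * I)
    field_simp
    linear_combination (exp (π * r * I) ^ 2 - 1) * Complex.I_sq
  have hcircle : ∫ y in (0 : ℝ)..(2 * π), exp (r * y * I) * ellipticGen (exp (y * I)) =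
      2 * Complex.sin (π * r) * exp (π * r * I) * (π / 2 * betaF r : ℝ) := by
    rw [rayIntegral_ellipticGen_one hr, hexp] at hshift
    exact mul_left_cancel₀ Complex.I_ne_zero (by linear_combination hshift)
  have hcongr : ∫ φ in (0 : ℝ)..(π / 2), exp ((4 * r - 2) * φ * I) * ellipticArc φ =
      ∫ φ in (0 : ℝ)..(π / 2), √2 * exp (-(π / 4) * I) *
        (exp (r * (4 * φ : ℝ) * I) * ellipticGen (exp ((4 * φ : ℝ) * I))) := by
    refine intervalIntegral.integral_congr_ae ?_
    filter_upwards [ae_mem_Ioo_zero_pi_div_two] with φ h hφ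
    exact cexp_mul_ellipticArc r (h hφ).1 (h hφ).2
  rw [hcongr, intervalIntegral.integral_const_mul, intervalIntegral.integral_comp_mul_left
    (fun y : ℝ => exp (r * y * I) * ellipticGen (exp (y * I))) four_ne_zero, mul_zero,
    show 4 * (π / 2) = 2 * π by ring, hcircle, Complex.real_smul, Complex.ofReal_sub, sub_mul,
    sub_eq_neg_add, Complex.exp_add]
  push_cast
  ring_nf

/-! ### Landen's transformation on the unit circle -/

/-- The generating function `(1 - 2 z cos θ + z²)^(-1/2)` of the Legendre polynomials at `cos θ`,
as a product of principal branches. -/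
noncomputable def legendreGen (θ : ℝ) (z : ℂ) : ℂ :=
  invSqrtOneSub (z * exp ((-θ : ℝ) * I)) * invSqrtOneSub (z * exp (θ * I))

/-- The plane cut along the two rays from `exp (± i θ)` to infinity, where `legendreGen θ` is
holomorphic. -/
def legendreDomain (θ : ℝ) : Set ℂ :=
  {z | z * exp ((-θ : ℝ) * I) ∈ cutPlane ∧ z * exp (θ * I) ∈ cutPlane}

lemma isOpen_legendreDomain (θ : ℝ) : IsOpen (legendreDomain θ) :=
  (isOpen_cutPlane.preimage (by fun_prop)).inter (isOpen_cutPlane.preimage (by fun_prop))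

lemma starConvex_legendreDomain (θ : ℝ) : StarConvex ℝ 0 (legendreDomain θ) := by
  intro z hz a b ha hb hab
  have h : ∀ w : ℂ, z * w ∈ cutPlane → (a • (0 : ℂ) + b • z) * w ∈ cutPlane := fun w hw => by
    simpa [mul_assoc] using starConvex_cutPlane hw ha hb hab
  exact ⟨h _ hz.1, h _ hz.2⟩

lemma ball_subset_legendreDomain (θ : ℝ) : ball 0 1 ⊆ legendreDomain θ := fun z hz => by
  have h : ∀ x : ℝ, z * exp (x * I) ∈ ball (0 : ℂ) 1 := fun x => by
    simpa [Complex.norm_exp_ofReal_mul_I] using hz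
  exact ⟨ball_subset_cutPlane (h (-θ)), ball_subset_cutPlane (h θ)⟩

lemma differentiableOn_legendreGen (θ : ℝ) :
    DifferentiableOn ℂ (legendreGen θ) (legendreDomain θ) :=
  (differentiableOn_invSqrtOneSub.comp (by fun_prop) fun _ hz => hz.1).mul
    (differentiableOn_invSqrtOneSub.comp (by fun_prop) fun _ hz => hz.2)

lemma legendreGen_conj {θ : ℝ} {z : ℂ} (hz : z ∈ legendreDomain θ) :
    legendreGen θ (conj z) = conj (legendreGen θ z) := by
  have h : ∀ x : ℝ, conj z * exp (x * I) = conj (z * exp ((-x : ℝ) * I)) := fun x => by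
    rw [map_mul, ← Complex.exp_conj, map_mul, Complex.conj_ofReal, Complex.conj_I]
    simp
  rw [legendreGen, h, h, neg_neg, invSqrtOneSub_conj hz.1, invSqrtOneSub_conj hz.2, legendreGen,
    map_mul, mul_comm]

lemma sin_le_max_norm_one_sub_mul_cexp (θ : ℝ) (z : ℂ) :
    Real.sin θ ≤ max ‖1 - z * exp ((-θ : ℝ) * I)‖ ‖1 - z * exp (θ * I)‖ := by
  set u := 1 - z * exp ((-θ : ℝ) * I) with hu
  set v := 1 - z * exp (θ * I) with hv
  have h : exp (θ * I) * u - exp ((-θ : ℝ) * I) * v = (2 * Real.sin θ : ℝ) * I := by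
    rw [hu, hv, Complex.exp_ofReal_mul_I, Complex.exp_ofReal_mul_I, Real.cos_neg, Real.sin_neg]
    push_cast
    ring
  have h2 := norm_sub_le (exp (θ * I) * u) (exp ((-θ : ℝ) * I) * v)
  rw [h] at h2
  rw [norm_mul, norm_mul, norm_mul, Complex.norm_exp_ofReal_mul_I, Complex.norm_exp_ofReal_mul_I,
    Complex.norm_I, Complex.norm_real, Real.norm_eq_abs, one_mul, one_mul, mul_one] at h2
  linarith [le_abs_self (2 * Real.sin θ), le_max_left ‖u‖ ‖v‖, le_max_right ‖u‖ ‖v‖]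

lemma norm_legendreGen_le {θ : ℝ} (hθ : 0 < Real.sin θ) {z : ℂ} (hz : z ∈ ball (0 : ℂ) 1) :
    ‖legendreGen θ z‖ ≤ Real.sin θ ^ (-(1 / 2) : ℝ) * (1 - ‖z‖) ^ (-(1 / 2) : ℝ) := by
  rw [mem_ball_zero_iff] at hz
  have hlow : ∀ x : ℝ, 1 - ‖z‖ ≤ ‖1 - z * exp (x * I)‖ := fun x => by
    simpa [Complex.norm_exp_ofReal_mul_I] using norm_sub_norm_le 1 (z * exp (x * I))
  have hmax := sin_le_max_norm_one_sub_mul_cexp θ z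
  have h1 := hlow (-θ)
  have h2 := hlow θ
  rw [legendreGen, norm_mul, norm_invSqrtOneSub, norm_invSqrtOneSub,
    ← Real.mul_rpow (norm_nonneg _) (norm_nonneg _), ← Real.mul_rpow hθ.le (by linarith)]
  refine Real.rpow_le_rpow_of_nonpos (mul_pos hθ (by linarith)) ?_ (by norm_num)
  rcases le_max_iff.1 hmax with h | h
  · exact mul_le_mul h h2 (by linarith) (norm_nonneg _)
  · rw [mul_comm (Real.sin θ)]
    exact mul_le_mul h1 h hθ.le (norm_nonneg _)

lemma cexp_mem_legendreDomain {θ y : ℝ} (hθ : θ < π) (hy : y ∈ Ioo 0 θ) :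
    exp (y * I) ∈ legendreDomain θ := by
  constructor
  · have h := cexp_mem_cutPlane (y := 2 * π - (θ - y)) (by linarith [hy.1, hy.2])
      (by linarith [hy.2])
    rwa [show ((2 * π - (θ - y) : ℝ) : ℂ) * I = y * I + (-θ : ℝ) * I + 2 * π * I by push_cast; ring,
      Complex.exp_periodic, Complex.exp_add] at h
  · rw [← Complex.exp_add, ← add_mul, ← Complex.ofReal_add]
    exact cexp_mem_cutPlane (by linarith [hy.1, hy.2]) (by linarith [hy.2])

lemma cexp_mul_legendreGen_cexp {θ y : ℝ} (hθ : θ < π) (hy : y ∈ Ioo 0 θ) :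
    exp ((1 / 2 : ℝ) * y * I) * legendreGen θ (exp (y * I)) =
      ((2 * (Real.cos y - Real.cos θ)) ^ (-(1 / 2) : ℝ) : ℝ) := by
  have hs1 : 0 < Real.sin ((θ - y) / 2) :=
    Real.sin_pos_of_pos_of_lt_pi (by linarith [hy.2]) (by linarith [hy.1, hy.2])
  have hs2 : 0 < Real.sin ((θ + y) / 2) :=
    Real.sin_pos_of_pos_of_lt_pi (by linarith [hy.1, hy.2]) (by linarith [hy.2])
  have hneg : exp (y * I) * exp ((-θ : ℝ) * I) = conj (exp ((θ - y : ℝ) * I)) := by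
    rw [← Complex.exp_conj, ← Complex.exp_add, map_mul, Complex.conj_ofReal, Complex.conj_I]
    push_cast
    ring_nf
  have hphase : exp ((1 / 2 : ℝ) * y * I) * (conj (exp (((π - (θ - y)) / 4 : ℝ) * I)) *
      exp (((π - (θ + y)) / 4 : ℝ) * I)) = 1 := by
    rw [← Complex.exp_conj, map_mul, Complex.conj_ofReal, Complex.conj_I, ← Complex.exp_add,
      ← Complex.exp_add, ← Complex.exp_zero]
    congr 1
    push_cast
    ring
  have hcos : 2 * (Real.cos y - Real.cos θ) =
      2 * Real.sin ((θ - y) / 2) * (2 * Real.sin ((θ + y) / 2)) := by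
    rw [Real.cos_sub_cos, add_comm y θ, show (y - θ) / 2 = -((θ - y) / 2) by ring, Real.sin_neg]
    ring
  rw [legendreGen, hneg, invSqrtOneSub_conj (cexp_mem_cutPlane (by linarith [hy.2])
    (by linarith [hy.1, hy.2])), ← Complex.exp_add, ← add_mul, ← Complex.ofReal_add, add_comm y θ,
    invSqrtOneSub_cexp (by linarith [hy.2]) (by linarith [hy.1, hy.2]),
    invSqrtOneSub_cexp (by linarith [hy.1, hy.2]) (by linarith [hy.2]), hcos,
    Real.mul_rpow (mul_pos two_pos hs1).le (mul_pos two_pos hs2).le, map_mul, Complex.conj_ofReal,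
    Complex.ofReal_mul]
  linear_combination (((2 * Real.sin ((θ - y) / 2)) ^ (-(1 / 2) : ℝ) : ℝ) *
    ((2 * Real.sin ((θ + y) / 2)) ^ (-(1 / 2) : ℝ) : ℝ)) * hphase

lemma rayIntegral_legendreGen_cexp (θ : ℝ) :
    rayIntegral (fun t => t ^ (1 / 2 - 1 : ℝ)) (legendreGen θ) (exp (θ * I)) =
      2 * ellipticK (exp ((2 * θ : ℝ) * I)) := by
  rw [ellipticK, ← mul_assoc, mul_one_div_cancel two_ne_zero, one_mul]
  refine intervalIntegral.integral_congr fun t ht => ?_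
  rw [uIcc_of_le zero_le_one] at ht
  have h1 : exp (θ * I) * exp ((-θ : ℝ) * I) = 1 := by
    rw [← Complex.exp_add, ← Complex.exp_zero]
    push_cast
    ring_nf
  have h2 : exp (θ * I) * exp (θ * I) = exp ((2 * θ : ℝ) * I) := by
    rw [← Complex.exp_add]
    push_cast
    ring_nf
  simp only [legendreGen]
  rw [mul_assoc, mul_assoc, h1, h2, mul_one, invSqrtOneSub_ofReal ht.2, Complex.ofReal_mul (_ ^ _),
    show (1 / 2 - 1 : ℝ) = -(1 / 2) by norm_num, mul_assoc]

/-- The function whose imaginary part is a primitive of the Mehler–Dirichlet integrand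
`(2 (cos y - cos θ))^(-1/2)` on `[0, θ]`. -/
noncomputable def mehlerPrimitive (θ y : ℝ) : ℂ :=
  exp ((1 / 2 : ℝ) * y * I) *
    rayIntegral (fun t => t ^ (1 / 2 - 1 : ℝ)) (legendreGen θ) (exp (y * I))

lemma continuous_mehlerPrimitive {θ : ℝ} (hθ : 0 < Real.sin θ) :
    Continuous (mehlerPrimitive θ) :=
  continuous_cexp_mul_rayIntegral (by norm_num) (by norm_num) (by norm_num)
    ((differentiableOn_legendreGen θ).continuousOn.mono (ball_subset_legendreDomain θ))
    fun _ hz => norm_legendreGen_le hθ hz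

lemma hasDerivAt_mehlerPrimitive {θ y : ℝ} (hθ : θ < π) (hy : y ∈ Ioo 0 θ) :
    HasDerivAt (mehlerPrimitive θ)
      (I * ((2 * (Real.cos y - Real.cos θ)) ^ (-(1 / 2) : ℝ) : ℝ)) y := by
  rw [← cexp_mul_legendreGen_cexp hθ hy]
  exact hasDerivAt_cexp_mul_rayIntegral (isOpen_legendreDomain θ) (starConvex_legendreDomain θ)
    (differentiableOn_legendreGen θ) (by norm_num) (cexp_mem_legendreDomain hθ hy)

lemma im_mehlerPrimitive_zero (θ : ℝ) : (mehlerPrimitive θ 0).im = 0 := by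
  have hreal : rayIntegral (fun t => t ^ (1 / 2 - 1 : ℝ)) (legendreGen θ) 1 =
      ((∫ t in (0 : ℝ)..1, t ^ (1 / 2 - 1 : ℝ) * (legendreGen θ t).re : ℝ) : ℂ) := by
    rw [← intervalIntegral.integral_ofReal, rayIntegral]
    refine intervalIntegral.integral_congr_ae ?_
    filter_upwards [ae_mem_Ioo_of_mem_uIoc] with t ht' ht
    have hmem := ball_subset_legendreDomain θ (ofReal_mul_mem_ball norm_one.le (ht' ht))
    rw [mul_one] at hmem ⊢
    rw [Complex.ofReal_mul, Complex.conj_eq_iff_re.1]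
    rw [← legendreGen_conj hmem, Complex.conj_ofReal]
  simp [mehlerPrimitive, hreal, -one_div]

lemma integral_mehler {θ : ℝ} (h0 : 0 < θ) (h1 : θ < π) :
    ∫ y in (0 : ℝ)..θ, (2 * (Real.cos y - Real.cos θ)) ^ (-(1 / 2) : ℝ) =
      2 * (exp ((1 / 2 : ℝ) * θ * I) * ellipticK (exp ((2 * θ : ℝ) * I))).im := by
  have hcont : ContinuousOn (fun y => (mehlerPrimitive θ y).im) (uIcc 0 θ) :=
    (Complex.continuous_im.comp (continuous_mehlerPrimitive
      (Real.sin_pos_of_pos_of_lt_pi h0 h1))).continuousOn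
  have hderiv : ∀ y ∈ Ioo (min 0 θ) (max 0 θ), HasDerivAt (fun y => (mehlerPrimitive θ y).im)
      ((2 * (Real.cos y - Real.cos θ)) ^ (-(1 / 2) : ℝ)) y := fun y hy => by
    rw [min_eq_left h0.le, max_eq_right h0.le] at hy
    exact (Complex.imCLM.hasFDerivAt.comp_hasDerivAt y
      (hasDerivAt_mehlerPrimitive h1 hy)).congr_deriv (by simp)
  have hint := intervalIntegral.intervalIntegrable_deriv_of_nonneg hcont hderiv fun y hy => by
    rw [min_eq_left h0.le, max_eq_right h0.le] at hy
    have := Real.cos_lt_cos_of_nonneg_of_le_pi hy.1.le h1.le hy.2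
    exact Real.rpow_nonneg (by linarith) _
  rw [intervalIntegral.integral_eq_sub_of_hasDeriv_right hcont
      (fun y hy => (hderiv y hy).hasDerivWithinAt) hint,
    im_mehlerPrimitive_zero, sub_zero, mehlerPrimitive, rayIntegral_legendreGen_cexp,
    mul_left_comm, ← Complex.ofReal_ofNat, Complex.im_ofReal_mul]

lemma cos_four_mul_arctan (x : ℝ) :
    Real.cos (4 * Real.arctan x) = 1 - 8 * x ^ 2 / (1 + x ^ 2) ^ 2 := by
  have : 1 + x ^ 2 ≠ 0 := by positivity
  rw [show 4 * Real.arctan x = 2 * (2 * Real.arctan x) by ring, Real.cos_two_mul, Real.cos_two_mul,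
    Real.cos_sq_arctan]
  field_simp
  ring

lemma hasDerivAt_four_mul_arctan_mul_sqrt (T : ℝ) {t : ℝ} (ht : 0 < t) :
    HasDerivAt (fun t => 4 * Real.arctan (T * √t))
      (2 * T * t ^ (-(1 / 2) : ℝ) / (1 + T ^ 2 * t)) t := by
  have h := (((Real.hasDerivAt_sqrt ht.ne').const_mul T).arctan).const_mul 4
  refine h.congr_deriv ?_
  rw [mul_pow, Real.sq_sqrt ht.le, Real.rpow_neg ht.le, ← Real.sqrt_eq_rpow]
  field_simp
  ring

lemma mehler_comp_four_mul_arctan {T t : ℝ} (hT0 : 0 < T) (hT1 : T < 1) (ht : t ∈ Ioo (0 : ℝ) 1) :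
    (2 * (Real.cos (4 * Real.arctan (T * √t)) - Real.cos (4 * Real.arctan T))) ^ (-(1 / 2) : ℝ) *
      (2 * T * t ^ (-(1 / 2) : ℝ) / (1 + T ^ 2 * t)) =
    (1 + T ^ 2) / 2 *
      (t ^ (-(1 / 2) : ℝ) * (1 - t) ^ (-(1 / 2) : ℝ) * (1 - t * T ^ 4) ^ (-(1 / 2) : ℝ)) := by
  have h1t : 0 < 1 - t := by linarith [ht.2]
  have hTt : 0 < 1 - t * T ^ 4 := by nlinarith [ht.1, ht.2, pow_lt_one₀ hT0.le hT1 four_ne_zero]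
  have hden : 0 < 1 + T ^ 2 * t := by have := ht.1; positivity
  have e : 2 * (Real.cos (4 * Real.arctan (T * √t)) - Real.cos (4 * Real.arctan T)) =
      (1 - t) * (1 - t * T ^ 4) * (4 * T / ((1 + T ^ 2) * (1 + T ^ 2 * t))) ^ 2 := by
    rw [cos_four_mul_arctan, cos_four_mul_arctan, mul_pow, Real.sq_sqrt ht.1.le]
    field_simp
    ring
  rw [e, Real.mul_rpow (by positivity) (by positivity), Real.mul_rpow h1t.le hTt.le,
    Real.rpow_neg (sq_nonneg (4 * T / _)), ← Real.sqrt_eq_rpow, Real.sqrt_sq (by positivity)]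
  generalize 1 + T ^ 2 * t = D at hden
  field_simp
  norm_num

lemma integral_mehler_four_mul_arctan {T : ℝ} (hT0 : 0 < T) (hT1 : T < 1) :
    ∫ y in (0 : ℝ)..(4 * Real.arctan T),
      (2 * (Real.cos y - Real.cos (4 * Real.arctan T))) ^ (-(1 / 2) : ℝ) =
      (1 + T ^ 2) * (ellipticK (T ^ 4 : ℝ)).re := by
  have key := intervalIntegral.integral_comp_mul_deriv_of_deriv_nonneg
    (f := fun t => 4 * Real.arctan (T * √t)) (a := 0) (b := 1)
    (g := fun y => (2 * (Real.cos y - Real.cos (4 * Real.arctan T))) ^ (-(1 / 2) : ℝ))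
    (by fun_prop)
    (fun t ht => hasDerivAt_four_mul_arctan_mul_sqrt T (by simpa using ht.1))
    (fun t ht => by
      have : 0 < t := by simpa using ht.1
      positivity)
  rw [Real.sqrt_one, mul_one, Real.sqrt_zero, mul_zero, Real.arctan_zero, mul_zero] at key
  rw [← key, ellipticK_ofReal (pow_le_one₀ hT0.le hT1.le), Complex.ofReal_re, ← mul_assoc,
    mul_one_div, ← intervalIntegral.integral_const_mul]
  refine intervalIntegral.integral_congr_ae ?_
  filter_upwards [ae_mem_Ioo_of_mem_uIoc] with t ht' ht
  exact mehler_comp_four_mul_arctan hT0 hT1 (ht' ht)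

lemma tan_half_mem_Ioo {φ : ℝ} (hφ : φ ∈ Ioo 0 (π / 2)) : Real.tan (φ / 2) ∈ Ioo (0 : ℝ) 1 := by
  refine ⟨Real.tan_pos_of_pos_of_lt_pi_div_two (by linarith [hφ.1]) (by linarith [hφ.1, hφ.2]), ?_⟩
  rw [← Real.tan_pi_div_four]
  exact Real.tan_lt_tan_of_nonneg_of_lt_pi_div_two (by linarith [hφ.1])
    (by linarith [Real.pi_pos]) (by linarith [hφ.2])

/- Both sides evaluate the Mehler–Dirichlet integral at `θ = 2 φ`; this is Landen's transformation
on the unit circle. -/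
lemma one_add_tan_sq_mul_ellipticK {φ : ℝ} (h0 : 0 < φ) (h1 : φ < π / 2) :
    (1 + Real.tan (φ / 2) ^ 2) * (ellipticK (Real.tan (φ / 2) ^ 4 : ℝ)).re =
      2 * (exp (φ * I) * ellipticK (exp ((4 * φ : ℝ) * I))).im := by
  obtain ⟨hT0, hT1⟩ := tan_half_mem_Ioo ⟨h0, h1⟩
  have harctan : 4 * Real.arctan (Real.tan (φ / 2)) = 2 * φ := by
    rw [Real.arctan_tan (by linarith) (by linarith)]
    ring
  rw [← integral_mehler_four_mul_arctan hT0 hT1, harctan,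
    integral_mehler (by linarith) (by linarith)]
  push_cast
  ring_nf

/-! ### Linear relations at the eighths -/

lemma betaF_add_betaF_add_half {r : ℝ} (hr : 0 < r) : betaF r + betaF (r + 1 / 2) =
    2 / π * ∫ t in (0 : ℝ)..1,
      t ^ (r - 1) * (1 + √t) * (1 - t) ^ (1 / 2 - 1 : ℝ) * (ellipticK t).re := by
  rw [betaF_eq_integral hr, betaF_eq_integral (by positivity), ← mul_add,
    ← intervalIntegral.integral_add (intervalIntegrable_rpow_mul_ellipticK hr)
      (intervalIntegrable_rpow_mul_ellipticK (by positivity))]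
  congr 1
  refine intervalIntegral.integral_congr_ae ?_
  filter_upwards [ae_mem_Ioo_of_mem_uIoc] with t ht' ht
  rw [add_sub_right_comm, Real.rpow_add (ht' ht).1, ← Real.sqrt_eq_rpow]
  ring

lemma sin_two_mul_eq_tan_half {φ : ℝ} (hφ : Real.cos (φ / 2) ≠ 0) :
    Real.sin (2 * φ) = Real.tan (φ / 2) * (1 - Real.tan (φ / 2) ^ 4) *
      (2 * Real.cos (φ / 2) ^ 3) ^ 2 := by
  obtain ⟨ψ, rfl⟩ : ∃ ψ, φ = 2 * ψ := ⟨φ / 2, by ring⟩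
  rw [mul_div_cancel_left₀ ψ two_ne_zero] at hφ ⊢
  rw [Real.sin_two_mul (2 * ψ), Real.sin_two_mul, Real.cos_two_mul', Real.tan_eq_sin_div_cos]
  field_simp
  linear_combination (-(Real.sin ψ * (Real.cos ψ ^ 2 - Real.sin ψ ^ 2))) *
    Real.sin_sq_add_cos_sq ψ

lemma cos_half_pos {φ : ℝ} (hφ : φ ∈ Icc 0 (π / 2)) : 0 < Real.cos (φ / 2) :=
  Real.cos_pos_of_mem_Ioo ⟨by linarith [hφ.1, Real.pi_pos], by linarith [hφ.2, Real.pi_pos]⟩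

lemma hasDerivAt_tan_half_pow_four {φ : ℝ} (hφ : φ ∈ Icc 0 (π / 2)) :
    HasDerivAt (fun x => Real.tan (x / 2) ^ 4)
      (2 * Real.tan (φ / 2) ^ 3 / Real.cos (φ / 2) ^ 2) φ := by
  have h := ((Real.hasDerivAt_tan (cos_half_pos hφ).ne').comp φ
    ((hasDerivAt_id φ).div_const 2)).pow 4
  refine h.congr_deriv ?_
  simp only [Function.comp_apply, id_eq]
  ring

lemma integrand_comp_tan_half_pow_four (r : ℝ) {φ : ℝ} (hφ : φ ∈ Ioo 0 (π / 2)) :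
    (Real.tan (φ / 2) ^ 4) ^ (r - 1) * (1 + √(Real.tan (φ / 2) ^ 4)) *
      (1 - Real.tan (φ / 2) ^ 4) ^ (1 / 2 - 1 : ℝ) * (ellipticK (Real.tan (φ / 2) ^ 4 : ℝ)).re *
      (2 * Real.tan (φ / 2) ^ 3 / Real.cos (φ / 2) ^ 2) =
    8 * (Real.cos (φ / 2) * Real.tan (φ / 2) ^ (4 * r - 1 / 2) * (ellipticArc φ).im) := by
  have hc := cos_half_pos (Ioo_subset_Icc_self hφ)
  have hlanden := one_add_tan_sq_mul_ellipticK hφ.1 hφ.2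
  obtain ⟨hτ, hτ1⟩ := tan_half_mem_Ioo hφ
  have hsin := sin_two_mul_eq_tan_half hc.ne'
  rw [ellipticArc, Complex.im_ofReal_mul, hsin]
  set τ := Real.tan (φ / 2)
  set c := Real.cos (φ / 2)
  have h4 : 0 < 1 - τ ^ 4 := sub_pos.2 (pow_lt_one₀ hτ.le hτ1 four_ne_zero)
  have hpow : (τ ^ 4) ^ (r - 1) * τ ^ 3 = τ ^ (4 * r - 1 / 2) * τ ^ (-(1 / 2) : ℝ) := by
    rw [← Real.rpow_natCast, ← Real.rpow_mul hτ.le, ← Real.rpow_natCast, ← Real.rpow_add hτ,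
      ← Real.rpow_add hτ]
    congr 1
    push_cast
    ring
  rw [show τ ^ 4 = (τ ^ 2) ^ 2 by ring, Real.sqrt_sq (sq_nonneg τ), ← pow_mul,
    Real.mul_rpow (by positivity) (sq_nonneg _), Real.mul_rpow hτ.le h4.le,
    Real.rpow_neg (sq_nonneg (2 * c ^ 3)), ← Real.sqrt_eq_rpow, Real.sqrt_sq (by positivity),
    show (1 / 2 - 1 : ℝ) = -(1 / 2) by norm_num]
  calc _ = ((τ ^ 4) ^ (r - 1) * τ ^ 3) * (1 - τ ^ 4) ^ (-(1 / 2) : ℝ) * 2 / c ^ 2 *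
        ((1 + τ ^ 2) * (ellipticK (τ ^ 4 : ℝ)).re) := by ring
    _ = _ := by
      rw [hpow, hlanden]
      field_simp
      norm_num
      ring

lemma betaF_add_betaF_add_half_eq_arc {r : ℝ} (hr : 0 < r) : betaF r + betaF (r + 1 / 2) =
    16 / π * ∫ φ in (0 : ℝ)..(π / 2),
      Real.cos (φ / 2) * Real.tan (φ / 2) ^ (4 * r - 1 / 2) * (ellipticArc φ).im := by
  have hpi := Real.pi_div_two_pos
  have key := intervalIntegral.integral_comp_mul_deriv_of_deriv_nonneg
    (f := fun x => Real.tan (x / 2) ^ 4) (a := 0) (b := π / 2)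
    (g := fun t => t ^ (r - 1) * (1 + √t) * (1 - t) ^ (1 / 2 - 1 : ℝ) * (ellipticK t).re)
    (f' := fun φ => 2 * Real.tan (φ / 2) ^ 3 / Real.cos (φ / 2) ^ 2)
    (fun φ hφ => by
      rw [uIcc_of_le hpi.le] at hφ
      exact (hasDerivAt_tan_half_pow_four hφ).continuousAt.continuousWithinAt)
    (fun φ hφ => by
      rw [min_eq_left hpi.le, max_eq_right hpi.le] at hφ
      exact hasDerivAt_tan_half_pow_four (Ioo_subset_Icc_self hφ))
    (fun φ hφ => by
      rw [min_eq_left hpi.le, max_eq_right hpi.le] at hφ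
      have := (tan_half_mem_Ioo hφ).1
      positivity)
  rw [show π / 2 / 2 = π / 4 by ring, Real.tan_pi_div_four, zero_div, Real.tan_zero, one_pow,
    zero_pow four_ne_zero] at key
  rw [betaF_add_betaF_add_half hr, ← key, show 16 / π = 2 / π * 8 by ring, mul_assoc (2 / π),
    ← intervalIntegral.integral_const_mul (8 : ℝ)]
  congr 1
  refine intervalIntegral.integral_congr_ae ?_
  filter_upwards [ae_mem_Ioo_zero_pi_div_two] with φ h hφ
  exact integrand_comp_tan_half_pow_four r (h hφ)

lemma integral_im_mul_ellipticArc (a b : ℂ) :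
    ∫ φ in (0 : ℝ)..(π / 2),
      ((a * exp ((φ / 2 : ℝ) * I) + b * exp (-(φ / 2 : ℝ) * I)) * ellipticArc φ).im =
    π * √2 / 4 * Real.cos (π / 8) * (betaF (5 / 8) * (a * exp ((3 * π / 8 : ℝ) * I)).im +
      betaF (3 / 8) * (b * exp ((π / 8 : ℝ) * I)).im) := by
  have hsin5 : Real.sin (π * (5 / 8)) = Real.cos (π / 8) := by
    rw [← Real.sin_add_pi_div_two]; ring_nf
  have hsin3 : Real.sin (π * (3 / 8)) = Real.cos (π / 8) := by
    rw [← Real.sin_pi_div_two_sub]; ring_nf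
  have hi5 := (intervalIntegrable_cexp_mul_ellipticArc (5 / 8)).const_mul a
  have hi3 := (intervalIntegrable_cexp_mul_ellipticArc (3 / 8)).const_mul b
  have h5 := integral_cexp_mul_ellipticArc (r := 5 / 8) (by norm_num)
  have h3 := integral_cexp_mul_ellipticArc (r := 3 / 8) (by norm_num)
  rw [hsin5, show π * (5 / 8) - π / 4 = 3 * π / 8 by ring] at h5
  rw [hsin3, show π * (3 / 8) - π / 4 = π / 8 by ring] at h3
  calc _ = ∫ φ in (0 : ℝ)..(π / 2), Complex.imCLM
        (a * (exp ((4 * (5 / 8 : ℝ) - 2) * φ * I) * ellipticArc φ) +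
          b * (exp ((4 * (3 / 8 : ℝ) - 2) * φ * I) * ellipticArc φ)) := by
        refine intervalIntegral.integral_congr fun φ _ => ?_
        rw [Complex.imCLM_apply, add_mul, mul_assoc, mul_assoc]
        congr 6 <;> push_cast <;> ring
    _ = _ := by
        rw [Complex.imCLM.intervalIntegral_comp_comm (hi5.add hi3),
          intervalIntegral.integral_add hi5 hi3, intervalIntegral.integral_const_mul,
          intervalIntegral.integral_const_mul, h5, h3, map_add, mul_left_comm a, mul_left_comm b,
          Complex.imCLM_apply, Complex.imCLM_apply, Complex.im_ofReal_mul, Complex.im_ofReal_mul]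
        ring

lemma cos_pi_div_eight_sq : Real.cos (π / 8) ^ 2 = (2 + √2) / 4 := by
  rw [Real.cos_sq, show 2 * (π / 8) = π / 4 by ring, Real.cos_pi_div_four]
  ring

lemma sin_mul_cos_pi_div_eight : Real.sin (π / 8) * Real.cos (π / 8) = √2 / 4 := by
  have h := Real.sin_two_mul (π / 8)
  rw [show 2 * (π / 8) = π / 4 by ring, Real.sin_pi_div_four] at h
  linarith

lemma sin_three_mul_pi_div_eight : Real.sin (3 * π / 8) = Real.cos (π / 8) := by
  rw [← Real.sin_pi_div_two_sub]
  ring_nf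

lemma cos_three_mul_pi_div_eight : Real.cos (3 * π / 8) = Real.sin (π / 8) := by
  rw [← Real.cos_pi_div_two_sub]
  ring_nf

lemma integral_cos_half_mul_im_ellipticArc :
    ∫ φ in (0 : ℝ)..(π / 2), Real.cos (φ / 2) * (ellipticArc φ).im =
      π * √2 / 8 * Real.cos (π / 8) *
        (Real.cos (π / 8) * betaF (5 / 8) + Real.sin (π / 8) * betaF (3 / 8)) := by
  have h := integral_im_mul_ellipticArc (1 / 2 : ℝ) (1 / 2 : ℝ)
  rw [Complex.im_ofReal_mul, Complex.im_ofReal_mul, Complex.exp_ofReal_mul_I_im,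
    Complex.exp_ofReal_mul_I_im, sin_three_mul_pi_div_eight] at h
  refine Eq.trans (intervalIntegral.integral_congr fun φ _ => ?_) (h.trans (by ring))
  rw [← Complex.im_ofReal_mul, Complex.ofReal_cos, Complex.cos]
  congr 2
  push_cast
  ring

lemma integral_sin_half_mul_im_ellipticArc :
    ∫ φ in (0 : ℝ)..(π / 2), Real.sin (φ / 2) * (ellipticArc φ).im =
      π * √2 / 8 * Real.cos (π / 8) *
        (Real.cos (π / 8) * betaF (3 / 8) - Real.sin (π / 8) * betaF (5 / 8)) := by
  have h := integral_im_mul_ellipticArc ((-1 / 2 : ℝ) * I) ((1 / 2 : ℝ) * I)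
  rw [mul_assoc _ I (exp ((3 * π / 8 : ℝ) * I)), mul_assoc _ I (exp ((π / 8 : ℝ) * I)),
    Complex.im_ofReal_mul, Complex.im_ofReal_mul, Complex.I_mul_im, Complex.I_mul_im,
    Complex.exp_ofReal_mul_I_re, Complex.exp_ofReal_mul_I_re,
    cos_three_mul_pi_div_eight] at h
  refine Eq.trans (intervalIntegral.integral_congr fun φ _ => ?_) (h.trans (by ring))
  rw [← Complex.im_ofReal_mul, Complex.ofReal_sin, Complex.sin]
  congr 2
  push_cast
  ring

lemma betaF_one_eighth_add :
    betaF (1 / 8) + betaF (5 / 8) = (√2 + 1) * betaF (5 / 8) + betaF (3 / 8) := by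
  have h := betaF_add_betaF_add_half_eq_arc (r := 1 / 8) (by norm_num)
  norm_num only [Real.rpow_zero, mul_one] at h
  rw [integral_cos_half_mul_im_ellipticArc] at h
  have hsqrt := Real.mul_self_sqrt two_pos.le
  rw [h]
  calc _ = 2 * √2 * (Real.cos (π / 8) ^ 2 * betaF (5 / 8) +
        Real.sin (π / 8) * Real.cos (π / 8) * betaF (3 / 8)) := by
        field_simp
        ring
    _ = _ := by
        rw [cos_pi_div_eight_sq, sin_mul_cos_pi_div_eight]
        linear_combination (betaF (5 / 8) + betaF (3 / 8)) / 2 * hsqrt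

lemma betaF_three_eighths_add :
    betaF (3 / 8) + betaF (7 / 8) = (√2 + 1) * betaF (3 / 8) - betaF (5 / 8) := by
  have htan : ∫ φ in (0 : ℝ)..(π / 2),
      Real.cos (φ / 2) * Real.tan (φ / 2) ^ (4 * (3 / 8) - 1 / 2 : ℝ) * (ellipticArc φ).im =
      ∫ φ in (0 : ℝ)..(π / 2), Real.sin (φ / 2) * (ellipticArc φ).im := by
    refine intervalIntegral.integral_congr fun φ hφ => ?_
    rw [uIcc_of_le Real.pi_div_two_pos.le] at hφ
    norm_num only [Real.rpow_one]
    rw [mul_comm (Real.cos _), Real.tan_mul_cos (cos_half_pos hφ).ne']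
  have hsqrt := Real.mul_self_sqrt two_pos.le
  rw [show (7 / 8 : ℝ) = 3 / 8 + 1 / 2 by norm_num,
    betaF_add_betaF_add_half_eq_arc (by norm_num), htan, integral_sin_half_mul_im_ellipticArc]
  calc _ = 2 * √2 * (Real.cos (π / 8) ^ 2 * betaF (3 / 8) -
        Real.sin (π / 8) * Real.cos (π / 8) * betaF (5 / 8)) := by
        field_simp
        ring
    _ = _ := by
        rw [cos_pi_div_eight_sq, sin_mul_cos_pi_div_eight]
        linear_combination (betaF (3 / 8) - betaF (5 / 8)) / 2 * hsqrt

lemma Fval_eighths {r s : ℚ} (n : ℕ) (hn : 1 - 4 * (r : ℝ) = 1 / 2 - n) (hd : r.den = 8)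
    (hs : s = r + 1 / 2) : Fval r s = √2 / 2 ^ n / 16 * betaF r := by
  rw [Fval, betaF, hn, hd, hs, Rat.cast_add, add_sub_cancel_left, Real.rpow_sub two_pos,
    ← Real.sqrt_eq_rpow, Real.rpow_natCast]
  push_cast
  ring

lemma Fval_linear_relations :
    Fval (1 / 8) (5 / 8) = 2 * Fval (3 / 8) (7 / 8) + 4 * √2 * Fval (5 / 8) (9 / 8) ∧
    Fval (3 / 8) (7 / 8) = √2 * (Fval (5 / 8) (9 / 8) + 2 * Fval (7 / 8) (11 / 8)) := by
  have hone := betaF_one_eighth_add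
  have hthree := betaF_three_eighths_add
  have hsqrt := Real.mul_self_sqrt two_pos.le
  rw [Fval_eighths 0 (by norm_num) (by norm_num) (by norm_num),
    Fval_eighths 1 (by norm_num) (by norm_num) (by norm_num),
    Fval_eighths 2 (by norm_num) (by norm_num) (by norm_num),
    Fval_eighths 3 (by norm_num) (by norm_num) (by norm_num)]
  push_cast
  constructor
  · linear_combination √2 / 16 * hone
  · linear_combination -(√2 / 32) * √2 / 2 * hthree + (-√2 / 64 * betaF (3 / 8)) * hsqrt

end

open Complex in
/-- F(1/8,5/8) − 2√3·F(3/8,7/8) − 4i√3·F(5/8,9/8) − 8i·F(7/8,11/8)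
    = 2·(1 − i√2 − √3)·(F(3/8,7/8) + 2i·F(5/8,9/8)). -/
theorem lvalue_class6_simplified :
    (Fval (1/8) (5/8) : ℂ) - 2 * (Real.sqrt 3 : ℂ) * (Fval (3/8) (7/8) : ℂ) -
        4 * I * (Real.sqrt 3 : ℂ) * (Fval (5/8) (9/8) : ℂ) -
        8 * I * (Fval (7/8) (11/8) : ℂ) =
      2 * (1 - I * (Real.sqrt 2 : ℂ) - (Real.sqrt 3 : ℂ)) *
        ((Fval (3/8) (7/8) : ℂ) + 2 * I * (Fval (5/8) (9/8) : ℂ)) := by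
  obtain ⟨h1, h2⟩ := Fval_linear_relations
  have h1' := congrArg ((↑) : ℝ → ℂ) h1
  have h2' := congrArg ((↑) : ℝ → ℂ) h2
  have hsqrt : ((√2 : ℝ) : ℂ) * (√2 : ℝ) = 2 := by
    rw [← ofReal_mul, Real.mul_self_sqrt two_pos.le, ofReal_ofNat]
  push_cast at h1' h2'
  linear_combination h1' + 2 * I * √2 * h2' +
    (2 * I * (Fval (5 / 8) (9 / 8) + 2 * Fval (7 / 8) (11 / 8))) * hsqrt +
    4 * √2 * Fval (5 / 8) (9 / 8) * I_sq
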